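/- Let n ≥ 1, let a ∈ T_n∖S_n be a singular transformation, and let G be a subgroup of S_n. If the semigroup ⟨G,a⟩∖G is idempotent generated, then ⟨G,a⟩∖G = ⟨a^g | g ∈ G⟩. -/

import Mathlib

/-!
Pushing all the permutations of a word over `G ∪ {a}` to the right turns `g₁ a g₂ a ⋯ a gₖ₊₁` into a
product of conjugates `a^g` followed by one element of `G`. Hence every element of `⟨G,a⟩ ∖ G` has
the form `c h` with `c ∈ C = ⟨a^g | g ∈ G⟩` and `h ∈ G` (`genGA_cases`). Since `C` is invariant
under conjugation by `G`, the powers of `c h` have the form `c' hᵐ` with `c' ∈ C`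
(`idem_eq_mul_pow`). If `c h` is idempotent, it equals all of its powers, and taking `m` to be the
order of `h` shows that it lies in `C`. So `C` contains all idempotents of `⟨G,a⟩ ∖ G`, and
therefore everything they generate. Conversely the elements of `C` are non-injective, so
`C ⊆ ⟨G,a⟩ ∖ G`.
-/

open Finset

/-- Transformations of a set `α`, composed left-to-right (acting on the right):
`x (a * b) = (x a) b`. -/
structure Transf (α : Type*) where
  toFun : α → α

namespace Transf

variable {α : Type*}

instance : Semigroup (Transf α) where
  mul a b := ⟨fun x => b.toFun (a.toFun x)⟩
  mul_assoc _ _ _ := rfl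

/-- The transformation induced by a permutation. -/
def ofPerm (g : Equiv.Perm α) : Transf α := ⟨g⟩

/-- The rank of a transformation: the cardinality of its image. -/
noncomputable def rank (a : Transf α) : ℕ := Set.ncard (Set.range a.toFun)

end Transf

/-- The subsemigroup `⟨G, a⟩` generated by `G ∪ {a}`. -/
def genGA {α : Type*} (G : Subgroup (Equiv.Perm α)) (a : Transf α) :
    Subsemigroup (Transf α) :=
  Subsemigroup.closure (insert a (Transf.ofPerm '' (G : Set (Equiv.Perm α))))

/-- The set `⟨G, a⟩ ∖ G`. -/
def genGAminusG {α : Type*} (G : Subgroup (Equiv.Perm α)) (a : Transf α) :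
    Set (Transf α) :=
  (genGA G a : Set (Transf α)) \ (Transf.ofPerm '' (G : Set (Equiv.Perm α)))

/-- The set of conjugates `a^g = g⁻¹ a g` with `g ∈ G`. -/
def conjSet {α : Type*} (G : Subgroup (Equiv.Perm α)) (a : Transf α) : Set (Transf α) :=
  (fun g : Equiv.Perm α => Transf.ofPerm g⁻¹ * a * Transf.ofPerm g) '' (G : Set (Equiv.Perm α))

/-- The subsemigroup `⟨a^g | g ∈ G⟩`. -/
def genConj {α : Type*} (G : Subgroup (Equiv.Perm α)) (a : Transf α) :
    Subsemigroup (Transf α) :=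
  Subsemigroup.closure (conjSet G a)

/-- A subset of the transformation semigroup is regular if every element `u` of it
admits `v` in the set with `u = u v u`. -/
def IsRegularSet {α : Type*} (S : Set (Transf α)) : Prop :=
  ∀ u ∈ S, ∃ v ∈ S, u * v * u = u

/-- A subset of the transformation semigroup is idempotent generated if it coincides with
the subsemigroup generated by its idempotent elements. -/
def IsIdemGen {α : Type*} (S : Set (Transf α)) : Prop :=
  S = ↑(Subsemigroup.closure {u | u ∈ S ∧ u * u = u})

/-- `T` is a transversal for the partition `P`: it meets each class in exactly one point. -/
def IsTransversal {α : Type*} [DecidableEq α] [Fintype α] (T : Finset α)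
    (P : Finpartition (Finset.univ : Finset α)) : Prop :=
  ∀ p ∈ P.parts, (T ∩ p).card = 1

/-- The universal transversal property: for every subset `I` and every partition `P`
with exactly `|I|` classes, some `G`-translate of `I` is a transversal for `P`. -/
def HasUTP {α : Type*} [DecidableEq α] [Fintype α] (G : Subgroup (Equiv.Perm α)) : Prop :=
  ∀ (I : Finset α) (P : Finpartition (Finset.univ : Finset α)),
    P.parts.card = I.card → ∃ g ∈ G, IsTransversal (I.image ⇑g) P

namespace Transf

variable {α : Type*}

/-- The order of the factors is reversed, since permutations compose right-to-left. -/
theorem ofPerm_mul_ofPerm (g h : Equiv.Perm α) : ofPerm g * ofPerm h = ofPerm (h * g) := rfl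

theorem one_mul' (x : Transf α) : ofPerm 1 * x = x := rfl

theorem mul_one' (x : Transf α) : x * ofPerm 1 = x := rfl

theorem ofPerm_inv_mul_cancel (g : Equiv.Perm α) (x : Transf α) :
    ofPerm g⁻¹ * (ofPerm g * x) = x := by
  rw [← mul_assoc, ofPerm_mul_ofPerm, mul_inv_cancel, one_mul']

theorem ofPerm_mul_inv_cancel (g : Equiv.Perm α) (x : Transf α) :
    ofPerm g * (ofPerm g⁻¹ * x) = x := by
  rw [← mul_assoc, ofPerm_mul_ofPerm, inv_mul_cancel, one_mul']

end Transf

open Transf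

section

variable {α : Type*} {G : Subgroup (Equiv.Perm α)} {a : Transf α}

theorem genConj_conj {c : Transf α} (hc : c ∈ genConj G a) {g : Equiv.Perm α} (hg : g ∈ G) :
    ofPerm g⁻¹ * c * ofPerm g ∈ genConj G a := by
  induction hc using Subsemigroup.closure_induction with
  | mem x hx =>
    obtain ⟨k, hk, rfl⟩ := hx
    exact Subsemigroup.subset_closure ⟨g * k, G.mul_mem hg hk, by
      simp only [mul_inv_rev, ← ofPerm_mul_ofPerm, mul_assoc]⟩
  | mul x y _ _ hx hy =>
    have := (genConj G a).mul_mem hx hy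
    simpa only [mul_assoc, ofPerm_mul_inv_cancel] using this

theorem genConj_conj' {c : Transf α} (hc : c ∈ genConj G a) {g : Equiv.Perm α} (hg : g ∈ G) :
    ofPerm g * c * ofPerm g⁻¹ ∈ genConj G a := by
  simpa only [inv_inv] using genConj_conj hc (G.inv_mem hg)

theorem genGA_cases {x : Transf α} (hx : x ∈ genGA G a) :
    x ∈ ofPerm '' (G : Set (Equiv.Perm α)) ∨
      ∃ c ∈ genConj G a, ∃ h ∈ G, x = c * ofPerm h := by
  induction hx using Subsemigroup.closure_induction with
  | mem x hx =>
    rcases hx with rfl | hx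
    · exact .inr ⟨x, Subsemigroup.subset_closure ⟨1, G.one_mem, rfl⟩, 1, G.one_mem, rfl⟩
    · exact .inl hx
  | mul x y _ _ hx hy =>
    rcases hx with ⟨g, hg, rfl⟩ | ⟨c, hc, g, hg, rfl⟩ <;>
      rcases hy with ⟨k, hk, rfl⟩ | ⟨d, hd, k, hk, rfl⟩
    · exact .inl ⟨k * g, G.mul_mem hk hg, rfl⟩
    · refine .inr ⟨_, genConj_conj' hd hg, k * g, G.mul_mem hk hg, ?_⟩
      simp only [← ofPerm_mul_ofPerm, mul_assoc, ofPerm_inv_mul_cancel]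
    · exact .inr ⟨c, hc, k * g, G.mul_mem hk hg, rfl⟩
    · refine .inr ⟨_, (genConj G a).mul_mem hc (genConj_conj' hd hg), k * g, G.mul_mem hk hg, ?_⟩
      simp only [← ofPerm_mul_ofPerm, mul_assoc, ofPerm_inv_mul_cancel]

/-- An idempotent `e = c h` satisfies `e = eᵐ⁺¹`, and collecting the permutations of this power on
the right leaves `hᵐ⁺¹`. -/
theorem idem_eq_mul_pow {e c : Transf α} {h : Equiv.Perm α} (he : e * e = e)
    (hc : c ∈ genConj G a) (hh : h ∈ G) (hec : e = c * ofPerm h) (m : ℕ) :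
    ∃ d ∈ genConj G a, e = d * ofPerm (h ^ (m + 1)) := by
  induction m with
  | zero => exact ⟨c, hc, by simpa using hec⟩
  | succ m ih =>
    obtain ⟨d, hd, hed⟩ := ih
    refine ⟨_, (genConj G a).mul_mem hd (genConj_conj' hc (G.pow_mem hh (m + 1))), ?_⟩
    calc e = e * e := he.symm
      _ = (d * ofPerm (h ^ (m + 1))) * (c * ofPerm h) := by rw [← hed, ← hec]
      _ = _ := by
        rw [pow_succ' h (m + 1), ← ofPerm_mul_ofPerm]
        simp only [mul_assoc, ofPerm_inv_mul_cancel]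

theorem idem_mem_genConj [Finite α] {e : Transf α} (he : e * e = e)
    (hmem : e ∈ genGAminusG G a) : e ∈ genConj G a := by
  rcases genGA_cases hmem.1 with hG | ⟨c, hc, h, hh, hec⟩
  · exact absurd hG hmem.2
  · obtain ⟨d, hd, hed⟩ := idem_eq_mul_pow he hc hh hec (orderOf h - 1)
    rw [Nat.sub_add_cancel (orderOf_pos h), pow_orderOf_eq_one, mul_one'] at hed
    rwa [hed]

theorem genConj_le_genGA : genConj G a ≤ genGA G a := by
  refine Subsemigroup.closure_le.2 ?_
  rintro _ ⟨g, hg, rfl⟩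
  have hP : ∀ k ∈ G, ofPerm k ∈ genGA G a := fun k hk =>
    Subsemigroup.subset_closure (.inr ⟨k, hk, rfl⟩)
  exact (genGA G a).mul_mem ((genGA G a).mul_mem (hP _ (G.inv_mem hg))
    (Subsemigroup.subset_closure (.inl rfl))) (hP _ hg)

theorem not_injective_of_mem_genConj (ha : ¬ Function.Injective a.toFun) {c : Transf α}
    (hc : c ∈ genConj G a) : ¬ Function.Injective c.toFun := by
  induction hc using Subsemigroup.closure_induction with
  | mem x hx =>
    obtain ⟨g, _, rfl⟩ := hx
    intro hinj
    have h1 : Function.Injective (⇑g ∘ a.toFun ∘ ⇑g⁻¹) := hinj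
    rw [g.injective.of_comp_iff, Equiv.injective_comp] at h1
    exact ha h1
  | mul x y _ _ hx _ =>
    intro hinj
    have h1 : Function.Injective (y.toFun ∘ x.toFun) := hinj
    exact hx h1.of_comp

end

theorem stmt7 (n : ℕ) (hn : 1 ≤ n) (a : Transf (Fin n))
    (ha : ¬ Function.Bijective a.toFun) (G : Subgroup (Equiv.Perm (Fin n)))
    (h : IsIdemGen (genGAminusG G a)) :
    genGAminusG G a = (genConj G a : Set (Transf (Fin n))) := by
  have ha' : ¬ Function.Injective a.toFun := fun hi => ha (Finite.injective_iff_bijective.1 hi)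
  apply Set.Subset.antisymm
  · rw [h]
    exact Subsemigroup.closure_le.2 fun e he => idem_mem_genConj he.2 he.1
  · intro c hc
    refine ⟨genConj_le_genGA hc, ?_⟩
    rintro ⟨g, _, rfl⟩
    exact not_injective_of_mem_genConj ha' hc g.injective
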